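/- Let β ∈ ℝ (not necessarily irrational), δ > 0, and let D be a holomorphic function from the open strip {z ∈ ℂ : |Im z| < δ} to M₂(ℂ), 1-periodic (D(z+1) = D(z)), such that det D is not identically zero. Then for every ε ∈ (−δ, δ) the Lyapunov exponent L(β, D_ε) is finite, and the function ε ↦ L(β, D_ε) is convex on (−δ, δ). -/

import Mathlib

open MeasureTheory Filter Complex
open scoped ENNReal Real NNReal

noncomputable section

attribute [local instance] Matrix.frobeniusNormedAddCommGroup

/-- The `n`-step cocycle iterate `D^{(n)}_β(x) = D(x+(n-1)β)⋯D(x)`. -/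
def cocycleIter (D : ℝ → Matrix (Fin 2) (Fin 2) ℂ) (β : ℝ) : ℕ → ℝ → Matrix (Fin 2) (Fin 2) ℂ
  | 0, _ => 1
  | n + 1, x => cocycleIter D β n (x + β) * D x

/-- The extended-real-valued integral `∫₀¹ log (g x) dx`, with value `-∞` allowed
(the positive and negative parts are integrated separately; `log 0 = -∞`). -/
def logIntegral (g : ℝ → ℝ) : EReal :=
  ((∫⁻ x in Set.Ioc (0 : ℝ) 1, ENNReal.ofReal (Real.log (g x))) : EReal) -
    ((∫⁻ x in Set.Ioc (0 : ℝ) 1,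
        if g x = 0 then (⊤ : ℝ≥0∞) else ENNReal.ofReal (-Real.log (g x))) : EReal)

/-- The Lyapunov exponent `L(β, D) = inf_{n ≥ 1} (1/n) ∫₀¹ log ‖D^{(n)}_β(x)‖ dx ∈ ℝ ∪ {-∞}`. -/
def lyapunov (β : ℝ) (D : ℝ → Matrix (Fin 2) (Fin 2) ℂ) : EReal :=
  ⨅ n : ℕ, ((((n : ℝ) + 1)⁻¹ : ℝ) : EReal) * logIntegral fun x => ‖cocycleIter D β (n + 1) x‖

attribute [local instance] Matrix.frobeniusNormedSpace

theorem Function.Periodic.uniformContinuous_of_continuous {φ : ℝ → ℝ}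
    (hper : Function.Periodic φ 1) (hφ : Continuous φ) : UniformContinuous φ := by
  have : Fact ((0 : ℝ) < 1) := ⟨one_pos⟩
  have hlift : Continuous (hper.lift : AddCircle (1 : ℝ) → ℝ) := continuous_coinduced_dom.2 hφ
  have hmk : UniformContinuous (QuotientAddGroup.mk' (AddSubgroup.zmultiples (1 : ℝ)) :
      ℝ → AddCircle (1 : ℝ)) :=
    uniformContinuous_addMonoidHom_of_continuous (AddCircle.continuous_mk' 1)
  exact (CompactSpace.uniformContinuous_of_continuous hlift).comp hmk

theorem Function.Periodic.eventually_abs_riemannSum_sub_le {φ : ℝ → ℝ} (hφ : Continuous φ)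
    (hper : Function.Periodic φ 1) {η : ℝ} (hη : 0 < η) :
    ∀ᶠ N : ℕ in atTop, ∀ x : ℝ,
      |∑ k ∈ Finset.range N, φ (x + k / N) - N * ∫ t in (0 : ℝ)..1, φ t| ≤ N * η := by
  have huc := hper.uniformContinuous_of_continuous hφ
  obtain ⟨r, hr, hφr⟩ := Metric.uniformContinuous_iff.1 huc η hη
  obtain ⟨M, hM⟩ := exists_nat_gt r⁻¹
  filter_upwards [eventually_ge_atTop M, eventually_gt_atTop 0] with N hN hN0 x
  have hN0' : (0 : ℝ) < N := by exact_mod_cast hN0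
  have hNr : (N : ℝ)⁻¹ < r := by
    apply inv_lt_of_inv_lt₀ hr
    exact hM.trans_le (by exact_mod_cast hN)
  have hint : ∀ a b : ℝ, IntervalIntegrable φ volume a b := fun a b => hφ.intervalIntegrable a b
  have hsplit : ∫ t in (0 : ℝ)..1, φ t =
      ∑ k ∈ Finset.range N, ∫ t in (x + k / N)..(x + (k + 1 : ℕ) / N), φ t := by
    rw [intervalIntegral.sum_integral_adjacent_intervals (a := fun k : ℕ => x + (k : ℝ) / N)
      (fun k _ => hint _ _)]
    have := hper.intervalIntegral_add_eq 0 x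
    rw [zero_add] at this
    rw [this]
    simp [hN0'.ne']
  rw [hsplit, Finset.mul_sum, ← Finset.sum_sub_distrib]
  refine (Finset.abs_sum_le_sum_abs _ _).trans ?_
  have hterm : ∀ k ∈ Finset.range N,
      |φ (x + k / N) - N * ∫ t in (x + k / N)..(x + (k + 1 : ℕ) / N), φ t| ≤ η := by
    intro k _
    have hlen : x + (k + 1 : ℕ) / N - (x + k / N) = (N : ℝ)⁻¹ := by
      push_cast; field_simp; ring
    have hle : x + (k : ℝ) / N ≤ x + (k + 1 : ℕ) / N := by
      have : (0 : ℝ) < (N : ℝ)⁻¹ := by positivity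
      linarith
    have hconst : φ (x + k / N) =
        N * ∫ _ in (x + k / N)..(x + (k + 1 : ℕ) / N), φ (x + k / N) := by
      rw [intervalIntegral.integral_const, hlen, smul_eq_mul, ← mul_assoc,
        mul_inv_cancel₀ hN0'.ne', one_mul]
    rw [hconst, ← mul_sub, ← intervalIntegral.integral_sub (by simp) (hint _ _), abs_mul,
      abs_of_pos hN0', ← Real.norm_eq_abs]
    have hb := intervalIntegral.norm_integral_le_of_norm_le_const
      (a := x + (k : ℝ) / N) (b := x + (k + 1 : ℕ) / N)
      (f := fun t => φ (x + k / N) - φ t) (C := η) (fun t ht => by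
        rw [Set.uIoc_of_le hle] at ht
        rw [← dist_eq_norm]
        refine (hφr ?_).le
        rw [Real.dist_eq, abs_lt]
        constructor <;> linarith [ht.1, ht.2])
    rw [hlen, abs_of_pos (by positivity)] at hb
    calc (N : ℝ) * _ ≤ N * (η * (N : ℝ)⁻¹) := by gcongr
      _ = η := by field_simp
  calc _ ≤ ∑ k ∈ Finset.range N, η := Finset.sum_le_sum hterm
    _ = N * η := by simp

section Strip

variable {δ : ℝ}

theorem isOpen_strip (δ : ℝ) : IsOpen {z : ℂ | |z.im| < δ} :=
  isOpen_lt (by fun_prop) continuous_const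

theorem convex_strip (δ : ℝ) : Convex ℝ {z : ℂ | |z.im| < δ} := by
  have : {z : ℂ | |z.im| < δ} = Complex.imLm ⁻¹' Set.Ioo (-δ) δ := by
    ext z; simp [abs_lt]
  rw [this]
  exact (convex_Ioo _ _).linear_preimage _

theorem line_mem_strip {ε : ℝ} (hε : ε ∈ Set.Ioo (-δ) δ) (x : ℝ) :
    (x : ℂ) + (ε : ℂ) * I ∈ {z : ℂ | |z.im| < δ} := by
  simpa [abs_lt] using hε

theorem periodic_line {E : Type*} {F : ℂ → E} (hper : ∀ z : ℂ, |z.im| < δ → F (z + 1) = F z) {ε : ℝ}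
    (hε : ε ∈ Set.Ioo (-δ) δ) :
    Function.Periodic (fun x : ℝ => F ((x : ℂ) + (ε : ℂ) * I)) 1 := by
  intro x
  have := hper _ (line_mem_strip hε x)
  simp only [← this]
  congr 1
  push_cast
  ring

theorem exists_norm_le_of_mem_Icc_im {E : Type*} [NormedAddCommGroup E] {F : ℂ → E}
    (hF : ContinuousOn F {z : ℂ | |z.im| < δ})
    (hper : ∀ z : ℂ, |z.im| < δ → F (z + 1) = F z) {a b : ℝ} (ha : a ∈ Set.Ioo (-δ) δ)
    (hb : b ∈ Set.Ioo (-δ) δ) : ∃ C : ℝ, ∀ z : ℂ, z.im ∈ Set.Icc a b → ‖F z‖ ≤ C := by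
  have hsub : ∀ y ∈ Set.Icc a b, y ∈ Set.Ioo (-δ) δ := fun y hy =>
    ⟨ha.1.trans_le hy.1, hy.2.trans_lt hb.2⟩
  have hK : IsCompact (Set.Icc (0 : ℝ) 1 ×ℂ Set.Icc a b) := isCompact_Icc.reProdIm isCompact_Icc
  obtain ⟨C, hC⟩ := hK.exists_bound_of_continuousOn (f := F) (hF.mono fun z hz => by
    simpa [abs_lt] using hsub _ hz.2)
  refine ⟨C, fun z hz => ?_⟩
  obtain ⟨y, hy, hzy⟩ := (periodic_line hper (hsub _ hz)).exists_mem_Ico₀ one_pos z.re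
  simp only [Complex.re_add_im] at hzy
  rw [hzy]
  exact hC _ (by simpa [Complex.mem_reProdIm] using ⟨⟨hy.1, hy.2.le⟩, hz⟩)

variable {E : Type*} [NormedAddCommGroup E] [NormedSpace ℂ E] {F : ℂ → E}

theorem DifferentiableOn.continuous_line (hF : DifferentiableOn ℂ F {z : ℂ | |z.im| < δ}) {ε : ℝ}
    (hε : ε ∈ Set.Ioo (-δ) δ) : Continuous fun x : ℝ => F ((x : ℂ) + (ε : ℂ) * I) :=
  hF.continuousOn.comp_continuous (by fun_prop) fun x => line_mem_strip hε x

/-- Three lines theorem for the product of the norms of finitely many real translates. -/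
theorem prod_norm_translate_le_of_strip (hF : DifferentiableOn ℂ F {z : ℂ | |z.im| < δ})
    (hper : ∀ z : ℂ, |z.im| < δ → F (z + 1) = F z) {a b : ℝ} (ha : a ∈ Set.Ioo (-δ) δ)
    (hb : b ∈ Set.Ioo (-δ) δ) (hab : a < b) {ι : Type*} (s : Finset ι) (θ : ι → ℝ) {A B : ℝ}
    (hA : ∀ x : ℝ, ∏ k ∈ s, ‖F ((x + θ k : ℝ) + (a : ℂ) * I)‖ ≤ A)
    (hB : ∀ x : ℝ, ∏ k ∈ s, ‖F ((x + θ k : ℝ) + (b : ℂ) * I)‖ ≤ B)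
    {c : ℝ} (hc : c ∈ Set.Icc a b) (x₀ : ℝ) :
    ∏ k ∈ s, ‖F ((x₀ + θ k : ℝ) + (c : ℂ) * I)‖ ≤
      A ^ (1 - (c - a) / (b - a)) * B ^ ((c - a) / (b - a)) := by
  choose u hu1 hu using fun k : ι =>
    exists_dual_vector'' ℂ (F ((x₀ + θ k : ℝ) + (c : ℂ) * I))
  let f : ℂ → ℂ := fun w => ∏ k ∈ s, u k (F (w * I + θ k))
  have hfle : ∀ w, ‖f w‖ ≤ ∏ k ∈ s, ‖F (w * I + θ k)‖ := fun w => by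
    simp only [f, norm_prod]
    refine Finset.prod_le_prod (fun _ _ => norm_nonneg _) fun k _ => ?_
    exact ((u k).le_of_opNorm_le (hu1 k) _).trans (by simp)
  have hsub : ∀ y ∈ Set.Icc a b, |y| < δ := fun y hy =>
    abs_lt.2 ⟨ha.1.trans_le hy.1, hy.2.trans_lt hb.2⟩
  have hdiff : DifferentiableOn ℂ f (Complex.re ⁻¹' Set.Icc a b) := by
    refine DifferentiableOn.fun_finsetProd fun k _ => ?_
    refine (u k).differentiable.comp_differentiableOn ?_
    refine hF.comp (by fun_prop) fun w hw => ?_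
    simpa using hsub _ hw
  have hd : DiffContOnCl ℂ f (HadamardThreeLines.verticalStrip a b) := by
    refine DifferentiableOn.diffContOnCl ?_
    rw [HadamardThreeLines.verticalStrip, closure_preimage_re, closure_Ioo hab.ne]
    exact hdiff
  have hbdd : BddAbove ((norm ∘ f) '' HadamardThreeLines.verticalClosedStrip a b) := by
    obtain ⟨C, hC⟩ := exists_norm_le_of_mem_Icc_im hF.continuousOn hper ha hb
    refine ⟨∏ k ∈ s, C, ?_⟩
    rintro _ ⟨w, hw, rfl⟩
    refine (hfle w).trans (Finset.prod_le_prod (fun _ _ => norm_nonneg _) fun k _ => hC _ ?_)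
    simpa [HadamardThreeLines.verticalClosedStrip] using hw
  have hline : ∀ w : ℂ, ∀ k, w * I + θ k = ((-w.im + θ k : ℝ) : ℂ) + (w.re : ℂ) * I := by
    intro w k
    apply Complex.ext <;> simp
  have key := HadamardThreeLines.norm_le_interp_of_mem_verticalClosedStrip' (f := f)
    (z := c - x₀ * I) (a := A) (b := B) hab (by
      simpa [HadamardThreeLines.verticalClosedStrip] using hc) hd hbdd
    (fun w hw => by
      refine (hfle w).trans ?_
      have hw' : w.re = a := hw
      simpa only [hline, hw'] using hA (-w.im))
    (fun w hw => by
      refine (hfle w).trans ?_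
      have hw' : w.re = b := hw
      simpa only [hline, hw'] using hB (-w.im))
  have hval : ‖f (c - x₀ * I)‖ = ∏ k ∈ s, ‖F ((x₀ + θ k : ℝ) + (c : ℂ) * I)‖ := by
    simp only [f, norm_prod]
    refine Finset.prod_congr rfl fun k _ => ?_
    rw [hline]
    have := hu k
    simp_all
  rw [hval] at key
  simpa using key

theorem convexOn_integral_log_norm_line_of_ne_zero
    (hF : DifferentiableOn ℂ F {z : ℂ | |z.im| < δ})
    (hper : ∀ z : ℂ, |z.im| < δ → F (z + 1) = F z) (hF0 : ∀ z : ℂ, |z.im| < δ → F z ≠ 0) :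
    ConvexOn ℝ (Set.Ioo (-δ) δ)
      fun ε : ℝ => ∫ x in (0 : ℝ)..1, Real.log ‖F ((x : ℂ) + (ε : ℂ) * I)‖ := by
  have hcont : ∀ {ε : ℝ}, ε ∈ Set.Ioo (-δ) δ →
      Continuous fun x : ℝ => Real.log ‖F ((x : ℂ) + (ε : ℂ) * I)‖ := fun hε =>
    (hF.continuous_line hε).norm.log fun x => norm_ne_zero_iff.2 (hF0 _ (line_mem_strip hε x))
  have hperiod : ∀ {ε : ℝ}, ε ∈ Set.Ioo (-δ) δ →
      Function.Periodic (fun x : ℝ => Real.log ‖F ((x : ℂ) + (ε : ℂ) * I)‖) 1 := fun hε x => by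
    have := periodic_line hper hε x
    simp only at this ⊢
    rw [this]
  refine LinearOrder.convexOn_of_lt (convex_Ioo _ _) fun a ha b hb hab p q hp hq hpq => ?_
  have hc : p • a + q • b ∈ Set.Ioo (-δ) δ := convex_Ioo _ _ ha hb hp.le hq.le hpq
  set c := p • a + q • b with hcdef
  set J : ℝ → ℝ := fun ε => ∫ x in (0 : ℝ)..1, Real.log ‖F ((x : ℂ) + (ε : ℂ) * I)‖
  change J c ≤ p • J a + q • J b
  refine le_of_forall_pos_le_add fun η hη => ?_
  have hη2 : 0 < η / 2 := by positivity
  obtain ⟨N, hNa, hNb, hNc, hN0⟩ :=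
    (((hperiod ha).eventually_abs_riemannSum_sub_le (hcont ha) hη2).and
      (((hperiod hb).eventually_abs_riemannSum_sub_le (hcont hb) hη2).and
        (((hperiod hc).eventually_abs_riemannSum_sub_le (hcont hc) hη2).and
          (eventually_gt_atTop 0)))).exists
  have hN0' : (0 : ℝ) < N := by exact_mod_cast hN0
  have hexp : ∀ {ε : ℝ}, ε ∈ Set.Ioo (-δ) δ → ∀ x : ℝ,
      ∏ k ∈ Finset.range N, ‖F ((x + (k : ℝ) / N : ℝ) + (ε : ℂ) * I)‖ =
        Real.exp (∑ k ∈ Finset.range N,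
          Real.log ‖F ((x + (k : ℝ) / N : ℝ) + (ε : ℂ) * I)‖) := fun hε x => by
    rw [Real.exp_sum]
    refine Finset.prod_congr rfl fun k _ => ?_
    rw [Real.exp_log (norm_pos_iff.2 (hF0 _ (line_mem_strip hε _)))]
  have key := prod_norm_translate_le_of_strip hF hper ha hb hab (Finset.range N)
    (fun k => (k : ℝ) / N) (A := Real.exp (N * (J a + η / 2))) (B := Real.exp (N * (J b + η / 2)))
    (fun x => by
      rw [hexp ha]
      exact Real.exp_le_exp.2 (by linarith [(abs_le.1 (hNa x)).2]))
    (fun x => by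
      rw [hexp hb]
      exact Real.exp_le_exp.2 (by linarith [(abs_le.1 (hNb x)).2]))
    (c := c) (by
      have h1 : p = 1 - q := by linarith
      simp only [hcdef, smul_eq_mul, h1]
      constructor <;> nlinarith) 0
  have hq' : (c - a) / (b - a) = q := by
    have h1 : p = 1 - q := by linarith
    rw [div_eq_iff (by linarith), hcdef, h1]
    simp only [smul_eq_mul]
    ring
  rw [hq', hexp hc, ← Real.exp_mul, ← Real.exp_mul, ← Real.exp_add, Real.exp_le_exp] at key
  have hlow := (abs_le.1 (hNc 0)).1
  have h1 : p = 1 - q := by linarith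
  have : (N : ℝ) * J c ≤ N * (p * J a + q * J b + η) := by
    rw [h1]
    change _ ≤ _ - N * J c at hlow
    linarith
  simpa using le_of_mul_le_mul_left this hN0'

theorem convexOn_of_tendsto {ι : Type*} {l : Filter ι} [l.NeBot] {s : Set ℝ}
    (hs : Convex ℝ s) {f : ι → ℝ → ℝ} {g : ℝ → ℝ} (hf : ∀ᶠ i in l, ConvexOn ℝ s (f i))
    (hg : ∀ x ∈ s, Tendsto (fun i => f i x) l (nhds (g x))) : ConvexOn ℝ s g := by
  refine ⟨hs, fun x hx y hy p q hp hq hpq => ?_⟩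
  refine le_of_tendsto_of_tendsto (hg _ (hs hx hy hp hq hpq))
    (((hg x hx).const_smul p).add ((hg y hy).const_smul q)) ?_
  filter_upwards [hf] with i hi
  exact hi.2 hx hy hp hq hpq

theorem convexOn_integral_log_norm_line
    (hF : DifferentiableOn ℂ F {z : ℂ | |z.im| < δ})
    (hper : ∀ z : ℂ, |z.im| < δ → F (z + 1) = F z)
    (hint : ∀ ε ∈ Set.Ioo (-δ) δ,
      IntervalIntegrable (fun x : ℝ => Real.log ‖F ((x : ℂ) + (ε : ℂ) * I)‖) volume 0 1)
    (hne : ∀ ε ∈ Set.Ioo (-δ) δ,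
      ∀ᵐ x : ℝ, x ∈ Set.uIoc (0 : ℝ) 1 → F ((x : ℂ) + (ε : ℂ) * I) ≠ 0) :
    ConvexOn ℝ (Set.Ioo (-δ) δ)
      fun ε : ℝ => ∫ x in (0 : ℝ)..1, Real.log ‖F ((x : ℂ) + (ε : ℂ) * I)‖ := by
  let c : ℕ → ℝ := fun m => 1 / ((m : ℝ) + 1)
  have hcpos : ∀ m, 0 < c m := fun m => by positivity
  have hcle : ∀ m, c m ≤ 1 := fun m => by
    simp only [c]
    rw [div_le_one (by positivity)]
    linarith [(Nat.cast_nonneg m : (0 : ℝ) ≤ m)]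
  have hnorm : ∀ m z, ‖(F z, (c m : ℂ))‖ = max ‖F z‖ (c m) := fun m z => by
    rw [Prod.norm_def, Complex.norm_of_nonneg (hcpos m).le]
  have hconv : ∀ m, ConvexOn ℝ (Set.Ioo (-δ) δ)
      fun ε : ℝ => ∫ x in (0 : ℝ)..1, Real.log (max ‖F ((x : ℂ) + (ε : ℂ) * I)‖ (c m)) := fun m => by
    have := convexOn_integral_log_norm_line_of_ne_zero (δ := δ) (F := fun z => (F z, (c m : ℂ)))
      (hF.prodMk (differentiableOn_const _)) (fun z hz => by simp only [hper z hz])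
      (fun z _ h => by
        have := (Prod.ext_iff.1 h).2
        simp [(hcpos m).ne'] at this)
    simpa only [hnorm] using this
  refine convexOn_of_tendsto (l := atTop) (convex_Ioo _ _) (Eventually.of_forall hconv) ?_
  intro ε hε
  refine intervalIntegral.tendsto_integral_filter_of_dominated_convergence
    (fun x => |Real.log ‖F ((x : ℂ) + (ε : ℂ) * I)‖|) ?_ ?_ (hint ε hε).abs ?_
  · refine Eventually.of_forall fun m => Continuous.aestronglyMeasurable ?_
    exact ((hF.continuous_line hε).norm.max continuous_const).log fun x =>
      (lt_max_of_lt_right (hcpos m)).ne'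
  · refine Eventually.of_forall fun m => ?_
    filter_upwards [hne ε hε] with x hx hx'
    have hpos := norm_pos_iff.2 (hx hx')
    rcases le_total (c m) ‖F ((x : ℂ) + (ε : ℂ) * I)‖ with h | h
    · rw [max_eq_left h, Real.norm_eq_abs]
    · rw [max_eq_right h, Real.norm_eq_abs, abs_of_nonpos (Real.log_nonpos (hcpos m).le (hcle m)),
        abs_of_nonpos (Real.log_nonpos hpos.le (h.trans (hcle m)))]
      exact neg_le_neg (Real.log_le_log hpos h)
  · filter_upwards [hne ε hε] with x hx hx'
    have hpos := norm_pos_iff.2 (hx hx')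
    refine tendsto_const_nhds.congr' ?_
    filter_upwards [(tendsto_one_div_add_atTop_nhds_zero_nat (𝕜 := ℝ)).eventually_lt_const hpos]
      with m hm
    rw [max_eq_left hm.le]

theorem DifferentiableOn.log_norm_line_integrable {h : ℂ → ℂ}
    (hh : DifferentiableOn ℂ h {z : ℂ | |z.im| < δ})
    (hne : ∃ z : ℂ, |z.im| < δ ∧ h z ≠ 0) {ε : ℝ} (hε : ε ∈ Set.Ioo (-δ) δ) :
    IntervalIntegrable (fun x : ℝ => Real.log ‖h ((x : ℂ) + (ε : ℂ) * I)‖) volume 0 1 ∧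
      ∀ᵐ x : ℝ, x ∈ Set.uIoc (0 : ℝ) 1 → h ((x : ℂ) + (ε : ℂ) * I) ≠ 0 := by
  have hanC : AnalyticOnNhd ℂ h {z : ℂ | |z.im| < δ} := hh.analyticOnNhd (isOpen_strip δ)
  have han : AnalyticOnNhd ℝ (fun x : ℝ => h ((x : ℂ) + (ε : ℂ) * I)) Set.univ := by
    intro x _
    have h1 : AnalyticAt ℝ h ((x : ℂ) + (ε : ℂ) * I) :=
      (hanC _ (line_mem_strip hε x)).restrictScalars
    have h2 : AnalyticAt ℝ (fun x : ℝ => (x : ℂ) + (ε : ℂ) * I) x :=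
      (Complex.ofRealCLM.analyticAt x).add analyticAt_const
    exact AnalyticAt.fun_comp_of_eq h1 h2 rfl
  refine ⟨(han.mono (Set.subset_univ _)).meromorphicOn.intervalIntegrable_log_norm, ?_⟩
  rcases han.eqOn_zero_or_eventually_ne_zero_of_preconnected isPreconnected_univ with h0 | h0
  · exfalso
    obtain ⟨z, hz, hz0⟩ := hne
    refine hz0 (hanC.eqOn_zero_of_preconnected_of_frequently_eq_zero
      (convex_strip δ).isPreconnected (line_mem_strip hε 0) ?_ hz)
    have ht : Tendsto (fun x : ℝ => (x : ℂ) + (ε : ℂ) * I) (nhdsWithin 0 {0}ᶜ)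
        (nhdsWithin (((0 : ℝ) : ℂ) + (ε : ℂ) * I) {((0 : ℝ) : ℂ) + (ε : ℂ) * I}ᶜ) := by
      refine tendsto_nhdsWithin_of_tendsto_nhds_of_eventually_within _ ?_ ?_
      · exact Continuous.continuousWithinAt (f := fun x : ℝ => (x : ℂ) + (ε : ℂ) * I)
          (by fun_prop)
      · filter_upwards [self_mem_nhdsWithin] with x hx
        simpa using hx
    exact ht.frequently (Eventually.of_forall fun x => h0 (Set.mem_univ x)).frequently
  · have := ae_restrict_le_codiscreteWithin (μ := (volume : Measure ℝ)) MeasurableSet.univ h0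
    rw [Measure.restrict_univ] at this
    filter_upwards [this] with x hx _ using hx

end Strip

theorem Function.Periodic.shift_intervalIntegrable {φ : ℝ → ℝ} (hper : Function.Periodic φ 1)
    (hφ : IntervalIntegrable φ volume 0 1) (t : ℝ) :
    IntervalIntegrable (fun x => φ (x + t)) volume 0 1 := by
  have := (hper.intervalIntegrable₀ one_ne_zero hφ t (1 + t)).comp_add_right t
  simpa using this

theorem Function.Periodic.integral_shift {φ : ℝ → ℝ} (hper : Function.Periodic φ 1) (t : ℝ) :
    ∫ x in (0 : ℝ)..1, φ (x + t) = ∫ x in (0 : ℝ)..1, φ x := by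
  rw [intervalIntegral.integral_comp_add_right φ t, zero_add, add_comm 1 t,
    hper.intervalIntegral_add_eq t 0, zero_add]

theorem logIntegral_eq_coe_integral {g : ℝ → ℝ}
    (hg : IntervalIntegrable (fun x => Real.log (g x)) volume 0 1)
    (hne : ∀ᵐ x : ℝ, x ∈ Set.uIoc (0 : ℝ) 1 → g x ≠ 0) :
    logIntegral g = ((∫ x in (0 : ℝ)..1, Real.log (g x) : ℝ) : EReal) := by
  rw [intervalIntegrable_iff_integrableOn_Ioc_of_le zero_le_one] at hg
  have hneg : (∫⁻ x in Set.Ioc (0 : ℝ) 1,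
      if g x = 0 then (⊤ : ℝ≥0∞) else ENNReal.ofReal (-Real.log (g x))) =
      ∫⁻ x in Set.Ioc (0 : ℝ) 1, ENNReal.ofReal (-Real.log (g x)) := by
    refine lintegral_congr_ae ((ae_restrict_iff' measurableSet_Ioc).2 ?_)
    filter_upwards [hne] with x hx hx'
    rw [Set.uIoc_of_le zero_le_one] at hx
    rw [if_neg (hx hx')]
  rw [logIntegral, hneg, intervalIntegral.integral_of_le zero_le_one,
    integral_eq_lintegral_pos_part_sub_lintegral_neg_part hg, EReal.coe_sub,
    EReal.coe_ennreal_toReal hg.lintegral_lt_top.ne,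
    EReal.coe_ennreal_toReal hg.fun_neg.lintegral_lt_top.ne]

theorem Matrix.norm_det_fin_two_le (M : Matrix (Fin 2) (Fin 2) ℂ) : ‖M.det‖ ≤ ‖M‖ ^ 2 := by
  have h : ‖M‖ ^ 2 = ‖M 0 0‖ ^ 2 + ‖M 0 1‖ ^ 2 + (‖M 1 0‖ ^ 2 + ‖M 1 1‖ ^ 2) := by
    rw [Matrix.frobenius_norm_def, ← Real.sqrt_eq_rpow, Real.sq_sqrt (by positivity)]
    simp [Fin.sum_univ_two]
  rw [h, Matrix.det_fin_two]
  refine (norm_sub_le _ _).trans ?_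
  rw [norm_mul, norm_mul]
  nlinarith [sq_nonneg (‖M 0 0‖ - ‖M 1 1‖), sq_nonneg (‖M 0 1‖ - ‖M 1 0‖),
    sq_nonneg ‖M 0 0‖, sq_nonneg ‖M 1 1‖, sq_nonneg ‖M 1 0‖, sq_nonneg ‖M 0 1‖]

theorem Matrix.half_log_norm_det_le {M : Matrix (Fin 2) (Fin 2) ℂ} (hM : M.det ≠ 0) :
    Real.log ‖M.det‖ / 2 ≤ Real.log ‖M‖ := by
  have := Real.log_le_log (norm_pos_iff.2 hM) M.norm_det_fin_two_le
  rw [Real.log_pow] at this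
  push_cast at this
  linarith

section MatrixStrip

variable {δ : ℝ}

theorem DifferentiableOn.matrix_det {G : ℂ → Matrix (Fin 2) (Fin 2) ℂ} {s : Set ℂ}
    (hG : DifferentiableOn ℂ G s) : DifferentiableOn ℂ (fun z => (G z).det) s := by
  have hentry : ∀ i j, DifferentiableOn ℂ (fun z => G z i j) s := fun i j =>
    (LinearMap.toContinuousLinearMap
      (Matrix.entryLinearMap ℂ ℂ i j)).differentiable.comp_differentiableOn hG
  simp only [Matrix.det_fin_two]
  exact ((hentry 0 0).mul (hentry 1 1)).sub ((hentry 0 1).mul (hentry 1 0))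

theorem log_norm_line_integrable_of_det {G : ℂ → Matrix (Fin 2) (Fin 2) ℂ}
    (hG : DifferentiableOn ℂ G {z : ℂ | |z.im| < δ})
    (hdet : ∃ z : ℂ, |z.im| < δ ∧ (G z).det ≠ 0) {ε : ℝ} (hε : ε ∈ Set.Ioo (-δ) δ) :
    IntervalIntegrable (fun x : ℝ => Real.log ‖G ((x : ℂ) + (ε : ℂ) * I)‖) volume 0 1 := by
  obtain ⟨hint, hne⟩ := hG.matrix_det.log_norm_line_integrable hdet hε
  have hcont := hG.continuous_line hε
  refine ((hint.div_const 2).abs.add (hcont.norm.intervalIntegrable 0 1)).mono_fun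
    (Real.measurable_log.comp hcont.norm.measurable).aestronglyMeasurable ?_
  refine (ae_restrict_iff' measurableSet_uIoc).2 ?_
  filter_upwards [hne] with x hx hx'
  have h1 := Matrix.half_log_norm_det_le (hx hx')
  have h2 := Real.log_le_self (norm_nonneg (G ((x : ℂ) + (ε : ℂ) * I)))
  have h3 := norm_nonneg (G ((x : ℂ) + (ε : ℂ) * I))
  have h4 := neg_abs_le (Real.log ‖(G ((x : ℂ) + (ε : ℂ) * I)).det‖ / 2)
  have h5 := abs_nonneg (Real.log ‖(G ((x : ℂ) + (ε : ℂ) * I)).det‖ / 2)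
  rw [Real.norm_eq_abs, Real.norm_eq_abs]
  refine le_trans ?_ (le_abs_self _)
  rw [abs_le]
  constructor <;> linarith

end MatrixStrip

/-- The holomorphic extension of `cocycleIter`. -/
def complexCocycle (D : ℂ → Matrix (Fin 2) (Fin 2) ℂ) (β : ℝ) : ℕ → ℂ → Matrix (Fin 2) (Fin 2) ℂ
  | 0, _ => 1
  | n + 1, z => complexCocycle D β n (z + β) * D z

section Cocycle

variable {D : ℂ → Matrix (Fin 2) (Fin 2) ℂ} {β δ : ℝ}

theorem cocycleIter_line (D : ℂ → Matrix (Fin 2) (Fin 2) ℂ) (β ε : ℝ) (n : ℕ) (x : ℝ) :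
    cocycleIter (fun x : ℝ => D ((x : ℂ) + (ε : ℂ) * I)) β n x =
      complexCocycle D β n ((x : ℂ) + (ε : ℂ) * I) := by
  induction n generalizing x with
  | zero => rfl
  | succ n ih =>
    rw [cocycleIter, complexCocycle, ih]
    push_cast
    rw [add_right_comm]

theorem complexCocycle_add (m n : ℕ) (z : ℂ) :
    complexCocycle D β (m + n) z =
      complexCocycle D β m (z + (n * β : ℝ)) * complexCocycle D β n z := by
  induction n generalizing z with
  | zero => simp [complexCocycle]
  | succ n ih =>
    rw [← add_assoc, complexCocycle, ih, complexCocycle, Matrix.mul_assoc]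
    congr 2
    push_cast
    ring

theorem differentiableOn_complexCocycle (hD : DifferentiableOn ℂ D {z : ℂ | |z.im| < δ}) (n : ℕ) :
    DifferentiableOn ℂ (complexCocycle D β n) {z : ℂ | |z.im| < δ} := by
  let _ : NormedRing (Matrix (Fin 2) (Fin 2) ℂ) := Matrix.frobeniusNormedRing
  let _ : NormedAlgebra ℂ (Matrix (Fin 2) (Fin 2) ℂ) := Matrix.frobeniusNormedAlgebra
  induction n with
  | zero => exact differentiableOn_const 1
  | succ n ih =>
    have : DifferentiableOn ℂ (fun z => complexCocycle D β n (z + β)) {z : ℂ | |z.im| < δ} :=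
      ih.comp (by fun_prop) fun z hz => by simpa using hz
    exact DifferentiableOn.mul (𝔸 := Matrix (Fin 2) (Fin 2) ℂ) this hD

theorem complexCocycle_add_one (hper : ∀ z : ℂ, |z.im| < δ → D (z + 1) = D z) (n : ℕ) (z : ℂ)
    (hz : |z.im| < δ) : complexCocycle D β n (z + 1) = complexCocycle D β n z := by
  induction n generalizing z with
  | zero => rfl
  | succ n ih =>
    rw [complexCocycle, complexCocycle, hper z hz, add_right_comm, ih]
    simpa using hz

theorem exists_det_complexCocycle_ne_zero (hδ : 0 < δ)
    (hD : DifferentiableOn ℂ D {z : ℂ | |z.im| < δ})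
    (hdet : ∃ z : ℂ, |z.im| < δ ∧ (D z).det ≠ 0) (n : ℕ) :
    ∃ z : ℂ, |z.im| < δ ∧ (complexCocycle D β n z).det ≠ 0 := by
  induction n with
  | zero => exact ⟨0, by simpa using hδ, by simp [complexCocycle]⟩
  | succ n ih =>
    have h0 : (0 : ℝ) ∈ Set.Ioo (-δ) δ := ⟨by linarith, hδ⟩
    have hshift : DifferentiableOn ℂ (fun z => (complexCocycle D β n (z + β)).det)
        {z : ℂ | |z.im| < δ} :=
      (differentiableOn_complexCocycle hD n).matrix_det.comp (by fun_prop) fun z hz => by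
        simpa using hz
    obtain ⟨w, hw, hw0⟩ := ih
    have h1 := (hshift.log_norm_line_integrable ⟨w - β, by simpa using hw, by simpa using hw0⟩ h0).2
    have h2 := (hD.matrix_det.log_norm_line_integrable hdet h0).2
    have : ∃ x : ℝ, x ∈ Set.uIoc (0 : ℝ) 1 ∧
        (x ∈ Set.uIoc (0 : ℝ) 1 → (complexCocycle D β n ((x : ℂ) + (0 : ℝ) * I + β)).det ≠ 0) ∧
        (x ∈ Set.uIoc (0 : ℝ) 1 → (D ((x : ℂ) + (0 : ℝ) * I)).det ≠ 0) := by
      refine Frequently.exists (f := ae volume) (Frequently.and_eventually ?_ (h1.and h2))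
      rw [frequently_ae_mem_iff]
      simp
    obtain ⟨x, hx, hx1, hx2⟩ := this
    refine ⟨_, line_mem_strip h0 x, ?_⟩
    rw [complexCocycle, Matrix.det_mul]
    exact mul_ne_zero (hx1 hx) (hx2 hx)

theorem ae_det_complexCocycle_line_ne_zero
    (hD : DifferentiableOn ℂ D {z : ℂ | |z.im| < δ})
    (hdet : ∃ z : ℂ, |z.im| < δ ∧ (D z).det ≠ 0) {ε : ℝ} (hε : ε ∈ Set.Ioo (-δ) δ) (n : ℕ) :
    ∀ᵐ x : ℝ, x ∈ Set.uIoc (0 : ℝ) 1 →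
      (complexCocycle D β n ((x : ℂ) + (ε : ℂ) * I)).det ≠ 0 :=
  ((differentiableOn_complexCocycle hD n).matrix_det.log_norm_line_integrable
    (exists_det_complexCocycle_ne_zero (by linarith [hε.1, hε.2]) hD hdet n) hε).2

/-- `∫₀¹ log ‖D^{(n)}(x + iε)‖ dx` as a real number. -/
def cocycleLogNorm (D : ℂ → Matrix (Fin 2) (Fin 2) ℂ) (β ε : ℝ) (n : ℕ) : ℝ :=
  ∫ x in (0 : ℝ)..1, Real.log ‖complexCocycle D β n ((x : ℂ) + (ε : ℂ) * I)‖

theorem intervalIntegrable_log_norm_complexCocycle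
    (hD : DifferentiableOn ℂ D {z : ℂ | |z.im| < δ})
    (hdet : ∃ z : ℂ, |z.im| < δ ∧ (D z).det ≠ 0) {ε : ℝ} (hε : ε ∈ Set.Ioo (-δ) δ) (n : ℕ) :
    IntervalIntegrable (fun x : ℝ => Real.log ‖complexCocycle D β n ((x : ℂ) + (ε : ℂ) * I)‖)
      volume 0 1 :=
  log_norm_line_integrable_of_det (differentiableOn_complexCocycle hD n)
    (exists_det_complexCocycle_ne_zero (by linarith [hε.1, hε.2]) hD hdet n) hε

theorem subadditive_cocycleLogNorm (hD : DifferentiableOn ℂ D {z : ℂ | |z.im| < δ})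
    (hper : ∀ z : ℂ, |z.im| < δ → D (z + 1) = D z)
    (hdet : ∃ z : ℂ, |z.im| < δ ∧ (D z).det ≠ 0) {ε : ℝ} (hε : ε ∈ Set.Ioo (-δ) δ) :
    Subadditive (cocycleLogNorm D β ε) := by
  intro m n
  have hint := fun k => intervalIntegrable_log_norm_complexCocycle (β := β) hD hdet hε k
  have hperm := (periodic_line (complexCocycle_add_one (β := β) hper m) hε).comp
    fun M => Real.log ‖M‖
  have hshift := hperm.integral_shift (n * β)
  have hshift_int := hperm.shift_intervalIntegrable (hint m) (n * β)
  simp only [Function.comp_def] at hshift hshift_int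
  unfold cocycleLogNorm
  rw [← hshift, ← intervalIntegral.integral_add hshift_int (hint n)]
  refine intervalIntegral.integral_mono_ae_restrict zero_le_one (hint _)
    (hshift_int.add (hint n)) ?_
  refine (ae_restrict_iff' measurableSet_Icc).2 ?_
  have h0 : ∀ᵐ x : ℝ, x ≠ 0 := by simp [ae_iff]
  filter_upwards [ae_det_complexCocycle_line_ne_zero (β := β) hD hdet hε (m + n), h0]
    with x hx hx0 hxm
  have hx := hx (by
    rw [Set.uIoc_of_le zero_le_one]
    exact ⟨lt_of_le_of_ne hxm.1 hx0.symm, hxm.2⟩)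
  rw [complexCocycle_add, Matrix.det_mul] at hx
  have hm : ∀ {M : Matrix (Fin 2) (Fin 2) ℂ}, M.det ≠ 0 → 0 < ‖M‖ := fun hM =>
    norm_pos_iff.2 fun h => hM (by simp [h])
  have hA := hm (left_ne_zero_of_mul hx)
  have hB := hm (right_ne_zero_of_mul hx)
  have harg : ((x + n * β : ℝ) : ℂ) + (ε : ℂ) * I = (x : ℂ) + (ε : ℂ) * I + (n * β : ℝ) := by
    push_cast
    ring
  rw [harg, ← Real.log_mul hA.ne' hB.ne', complexCocycle_add]
  refine Real.log_le_log (hm ?_) (Matrix.frobenius_norm_mul _ _)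
  rwa [Matrix.det_mul]

theorem integral_log_norm_det_complexCocycle (hD : DifferentiableOn ℂ D {z : ℂ | |z.im| < δ})
    (hper : ∀ z : ℂ, |z.im| < δ → D (z + 1) = D z)
    (hdet : ∃ z : ℂ, |z.im| < δ ∧ (D z).det ≠ 0) {ε : ℝ} (hε : ε ∈ Set.Ioo (-δ) δ) (n : ℕ) :
    ∫ x in (0 : ℝ)..1, Real.log ‖(complexCocycle D β n ((x : ℂ) + (ε : ℂ) * I)).det‖ =
      n * ∫ x in (0 : ℝ)..1, Real.log ‖(D ((x : ℂ) + (ε : ℂ) * I)).det‖ := by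
  induction n with
  | zero => simp [complexCocycle]
  | succ n ih =>
    have hint := ((differentiableOn_complexCocycle (β := β) hD n).matrix_det.log_norm_line_integrable
      (exists_det_complexCocycle_ne_zero (by linarith [hε.1, hε.2]) hD hdet n) hε).1
    have hperm := (periodic_line (complexCocycle_add_one (β := β) hper n) hε).comp
      fun M => Real.log ‖M.det‖
    have hshift := hperm.integral_shift β
    have hshift_int := hperm.shift_intervalIntegrable hint β
    simp only [Function.comp_def] at hshift hshift_int
    push_cast
    rw [add_mul, one_mul, ← ih, ← hshift, ← intervalIntegral.integral_add hshift_int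
      (hD.matrix_det.log_norm_line_integrable hdet hε).1]
    refine intervalIntegral.integral_congr_ae ?_
    filter_upwards [ae_det_complexCocycle_line_ne_zero (β := β) hD hdet hε (n + 1)] with x hx hxm
    have hx := hx hxm
    have harg : ((x + β : ℝ) : ℂ) + (ε : ℂ) * I = (x : ℂ) + (ε : ℂ) * I + β := by
      push_cast
      ring
    rw [complexCocycle, Matrix.det_mul] at hx ⊢
    rw [harg, norm_mul, Real.log_mul (norm_ne_zero_iff.2 (left_ne_zero_of_mul hx))
      (norm_ne_zero_iff.2 (right_ne_zero_of_mul hx))]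

theorem bddBelow_cocycleLogNorm_div (hD : DifferentiableOn ℂ D {z : ℂ | |z.im| < δ})
    (hper : ∀ z : ℂ, |z.im| < δ → D (z + 1) = D z)
    (hdet : ∃ z : ℂ, |z.im| < δ ∧ (D z).det ≠ 0) {ε : ℝ} (hε : ε ∈ Set.Ioo (-δ) δ) :
    BddBelow (Set.range fun n : ℕ => cocycleLogNorm D β ε n / n) := by
  set d := ∫ x in (0 : ℝ)..1, Real.log ‖(D ((x : ℂ) + (ε : ℂ) * I)).det‖ with hd
  refine ⟨min 0 (d / 2), ?_⟩
  rintro _ ⟨n, rfl⟩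
  rcases Nat.eq_zero_or_pos n with rfl | hn
  · simp
  refine (min_le_right _ _).trans ?_
  have hn' : (0 : ℝ) < n := by exact_mod_cast hn
  have hint := ((differentiableOn_complexCocycle (β := β) hD n).matrix_det.log_norm_line_integrable
    (exists_det_complexCocycle_ne_zero (by linarith [hε.1, hε.2]) hD hdet n) hε).1
  have hle : (n * d) / 2 ≤ cocycleLogNorm D β ε n := by
    rw [hd, ← integral_log_norm_det_complexCocycle (β := β) hD hper hdet hε n,
      ← intervalIntegral.integral_div]
    refine intervalIntegral.integral_mono_ae_restrict zero_le_one (hint.div_const 2)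
      (intervalIntegrable_log_norm_complexCocycle hD hdet hε n) ?_
    refine (ae_restrict_iff' measurableSet_Icc).2 ?_
    have h0 : ∀ᵐ x : ℝ, x ≠ 0 := by simp [ae_iff]
    filter_upwards [ae_det_complexCocycle_line_ne_zero (β := β) hD hdet hε n, h0]
      with x hx hx0 hxm
    refine Matrix.half_log_norm_det_le (hx ?_)
    rw [Set.uIoc_of_le zero_le_one]
    exact ⟨lt_of_le_of_ne hxm.1 hx0.symm, hxm.2⟩
  rw [le_div_iff₀ hn']
  linarith

theorem lyapunov_line_eq_coe_lim (hD : DifferentiableOn ℂ D {z : ℂ | |z.im| < δ})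
    (hper : ∀ z : ℂ, |z.im| < δ → D (z + 1) = D z)
    (hdet : ∃ z : ℂ, |z.im| < δ ∧ (D z).det ≠ 0) {ε : ℝ} (hε : ε ∈ Set.Ioo (-δ) δ) :
    lyapunov β (fun x : ℝ => D ((x : ℂ) + (ε : ℂ) * I)) =
      ((subadditive_cocycleLogNorm (β := β) hD hper hdet hε).lim : EReal) := by
  have hbdd := bddBelow_cocycleLogNorm_div (β := β) hD hper hdet hε
  set hsub := subadditive_cocycleLogNorm (β := β) hD hper hdet hε
  have hterm : ∀ n : ℕ, ((((n : ℝ) + 1)⁻¹ : ℝ) : EReal) * (logIntegral fun x =>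
      ‖cocycleIter (fun x : ℝ => D ((x : ℂ) + (ε : ℂ) * I)) β (n + 1) x‖) =
      ((cocycleLogNorm D β ε (n + 1) / (n + 1 : ℕ) : ℝ) : EReal) := fun n => by
    simp only [cocycleIter_line]
    rw [logIntegral_eq_coe_integral (intervalIntegrable_log_norm_complexCocycle hD hdet hε _),
      ← EReal.coe_mul, div_eq_inv_mul, cocycleLogNorm]
    · push_cast
      rfl
    · filter_upwards [ae_det_complexCocycle_line_ne_zero (β := β) hD hdet hε (n + 1)] with x hx hxm
      exact norm_ne_zero_iff.2 fun h => hx hxm (by simp [h])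
  unfold lyapunov
  simp only [hterm]
  refine le_antisymm ?_ (le_iInf fun n => EReal.coe_le_coe_iff.2 (hsub.lim_le_div hbdd n.succ_ne_zero))
  refine ge_of_tendsto' (f := fun n : ℕ =>
    ((cocycleLogNorm D β ε (n + 1) / (n + 1 : ℕ) : ℝ) : EReal)) (x := atTop) ?_ fun n => iInf_le _ n
  exact (continuous_coe_real_ereal.tendsto _).comp
    ((hsub.tendsto_lim hbdd).comp (tendsto_add_atTop_nat 1))

end Cocycle

/-- For any frequency `β`, if `D` is 1-periodic and holomorphic on the strip
`|Im z| < δ` with `det D` not identically zero, then `ε ↦ L(β, D_ε)` is finite on `(-δ, δ)`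
and convex there. -/
theorem lyapunov_finite_convex_in_strip
    (β δ : ℝ) (hδ : 0 < δ) (D : ℂ → Matrix (Fin 2) (Fin 2) ℂ)
    (hD : DifferentiableOn ℂ D {z : ℂ | |z.im| < δ})
    (hper : ∀ z : ℂ, |z.im| < δ → D (z + 1) = D z)
    (hdet : ∃ z : ℂ, |z.im| < δ ∧ (D z).det ≠ 0) :
    (∀ ε ∈ Set.Ioo (-δ) δ,
        lyapunov β (fun x : ℝ => D ((x : ℂ) + (ε : ℂ) * Complex.I)) ≠ ⊥ ∧
        lyapunov β (fun x : ℝ => D ((x : ℂ) + (ε : ℂ) * Complex.I)) ≠ ⊤) ∧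
    ConvexOn ℝ (Set.Ioo (-δ) δ)
      (fun ε : ℝ => (lyapunov β (fun x : ℝ => D ((x : ℂ) + (ε : ℂ) * Complex.I))).toReal) := by
  refine ⟨fun ε hε => ?_, ?_⟩
  · rw [lyapunov_line_eq_coe_lim hD hper hdet hε]
    exact ⟨EReal.coe_ne_bot _, EReal.coe_ne_top _⟩
  refine convexOn_of_tendsto (l := atTop) (f := fun (n : ℕ) ε => cocycleLogNorm D β ε n / n)
    (convex_Ioo _ _) (Eventually.of_forall fun n => ?_) fun ε hε => ?_
  · have hconv := convexOn_integral_log_norm_line (differentiableOn_complexCocycle (β := β) hD n)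
      (complexCocycle_add_one hper n)
      (fun ε hε => intervalIntegrable_log_norm_complexCocycle hD hdet hε n)
      (fun ε hε => by
        filter_upwards [ae_det_complexCocycle_line_ne_zero (β := β) hD hdet hε n] with x hx hxm h
        exact hx hxm (by simp [h]))
    simpa only [cocycleLogNorm, smul_eq_mul, div_eq_inv_mul] using
      hconv.smul (inv_nonneg.2 (Nat.cast_nonneg n))
  · rw [lyapunov_line_eq_coe_lim hD hper hdet hε, EReal.toReal_coe]
    exact (subadditive_cocycleLogNorm hD hper hdet hε).tendsto_lim
      (bddBelow_cocycleLogNorm_div hD hper hdet hε)
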